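/- (Faithfulness.) Fix a priority order σ and MRF valuations f_1,…,f_n on a finite item set M. Let A be a non-redundant σ-Lorenz dominating allocation for the profile (f_1,…,f_n), and fix an agent i. Then every non-redundant σ-Lorenz dominating allocation A' for the profile in which f_i is replaced by the restricted valuation f_{i|A_i} (and all other valuations are unchanged) satisfies A'_i = A_i. -/

import Mathlib

open Finset
open scoped Classical

variable {n : ℕ} {I : Type*} [DecidableEq I] [Fintype I]

/-- An allocation assigns pairwise disjoint bundles of items to the agents
(items may remain unallocated). -/
def IsAllocation (A : Fin n → Finset I) : Prop :=
  ∀ i j : Fin n, i ≠ j → Disjoint (A i) (A j)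

/-- The vector of utilities of an allocation under a profile of valuations. -/
def util {α : Type*} (f : Fin n → Finset I → α) (A : Fin n → Finset I) : Fin n → α :=
  fun i => f i (A i)

/-- The entries of the vector `u`, sorted in nondecreasing order. -/
noncomputable def sortedVec {α : Type*} [LinearOrder α] (u : Fin n → α) : List α :=
  (Finset.univ.val.map u).sort (· ≤ ·)

/-- `u` Lorenz-dominates `v`: for each `k`, the sum of the `k` smallest entries of `u`
is at least the sum of the `k` smallest entries of `v`. -/
def LorenzGE {α : Type*} [LinearOrder α] [AddCommMonoid α] (u v : Fin n → α) : Prop :=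
  ∀ k : ℕ, ((sortedVec v).take k).sum ≤ ((sortedVec u).take k).sum

/-- A matroid rank function: a normalized submodular valuation with dichotomous marginals. -/
structure IsMRF (f : Finset I → ℕ) : Prop where
  empty : f ∅ = 0
  submod : ∀ S T : Finset I, S ⊆ T → ∀ a : I,
      f (insert a T) + f S ≤ f (insert a S) + f T
  dichot : ∀ (S : Finset I) (a : I), f (insert a S) = f S ∨ f (insert a S) = f S + 1

/-- Non-redundancy: removing any item from any agent's bundle strictly decreases its value. -/
def NonRedundant (f : Fin n → Finset I → ℕ) (A : Fin n → Finset I) : Prop :=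
  ∀ i : Fin n, ∀ a ∈ A i, f i ((A i).erase a) < f i (A i)

/-- A Lorenz dominating allocation. -/
def LorenzDominating (f : Fin n → Finset I → ℕ) (A : Fin n → Finset I) : Prop :=
  ∀ B : Fin n → Finset I, IsAllocation B → LorenzGE (util f A) (util f B)

/-- The σ-perturbed utilities: agent `i` gets `f i (A i) + σ(i)/n²`, where the priority
`σ(i)` ranges over `{1,…,n}`. -/
noncomputable def pUtil (σ : Equiv.Perm (Fin n)) (f : Fin n → Finset I → ℕ)
    (A : Fin n → Finset I) : Fin n → ℝ :=
  fun i => (f i (A i) : ℝ) + (((σ i : ℕ) : ℝ) + 1) / (n : ℝ) ^ 2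

/-- A σ-Lorenz dominating allocation. -/
def SigmaLorenzDom (σ : Equiv.Perm (Fin n)) (f : Fin n → Finset I → ℕ)
    (A : Fin n → Finset I) : Prop :=
  ∀ B : Fin n → Finset I, IsAllocation B → LorenzGE (pUtil σ f A) (pUtil σ f B)

/-- Restriction of a valuation to a subset `D` of the items. -/
def restrictVal (f : Finset I → ℕ) (D : Finset I) : Finset I → ℕ := fun S => f (S ∩ D)

/-- A partition of all the items into `n` (possibly empty) bundles. -/
def IsPartition (P : Fin n → Finset I) : Prop :=
  (∀ i j : Fin n, i ≠ j → Disjoint (P i) (P j)) ∧ ∀ a : I, ∃ j, a ∈ P j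

/-- An XOS valuation: the pointwise maximum of a finite nonempty family of
nonnegative additive valuations. -/
def IsXOS (f : Finset I → ℝ) : Prop :=
  ∃ (k : ℕ) (w : Fin (k + 1) → I → ℝ),
    (∀ t a, 0 ≤ w t a) ∧
    ∀ S : Finset I, f S = Finset.univ.sup' Finset.univ_nonempty (fun t => ∑ a ∈ S, w t a)

/-- A dichotomous valuation (real-valued version). -/
def IsDichotomousR (f : Finset I → ℝ) : Prop :=
  ∀ (S : Finset I) (a : I), f (insert a S) = f S ∨ f (insert a S) = f S + 1

/-- Envy-freeness up to one good. -/
def EF1 (f : Fin n → Finset I → ℝ) (A : Fin n → Finset I) : Prop :=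
  ∀ i j : Fin n, f i (A j) ≤ f i (A i) ∨ ∃ e ∈ A j, f i ((A j).erase e) ≤ f i (A i)

/-- The maximum welfare attainable by a set `S` of agents. -/
noncomputable def maxWelfare (f : Fin n → Finset I → ℕ) (S : Finset (Fin n)) : ℕ :=
  Finset.sup (Finset.univ.filter fun B : Fin n → Finset I => IsAllocation B)
    (fun B => ∑ j ∈ S, f j (B j))

/-- An allocation extended with index `none` for the set of unallocated items. -/
def extAlloc (A : Fin n → Finset I) : Option (Fin n) → Finset I
  | none => Finset.univ \ Finset.univ.biUnion A
  | some i => A i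

theorem LorenzGE.map_eq {n : ℕ} {u v : Fin n → ℝ} (huv : LorenzGE u v) (hvu : LorenzGE v u) :
    Finset.univ.val.map u = Finset.univ.val.map v := by
  have hsort : sortedVec u = sortedVec v :=
    List.eq_of_sum_take_eq (by simp [sortedVec]) fun k _ => le_antisymm (hvu k) (huv k)
  rw [← Multiset.sort_eq (Finset.univ.val.map u) (· ≤ ·),
    ← Multiset.sort_eq (Finset.univ.val.map v) (· ≤ ·)]
  exact congrArg _ hsort

/-- The perturbation identifies the agent, so a perturbed utility determines both
the agent and its value. -/
theorem eq_of_perturbed_eq {n : ℕ} (σ : Equiv.Perm (Fin n)) {i j : Fin n} {a b : ℕ}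
    (h : (a : ℝ) + (((σ i : ℕ) : ℝ) + 1) / (n : ℝ) ^ 2
      = (b : ℝ) + (((σ j : ℕ) : ℝ) + 1) / (n : ℝ) ^ 2) : i = j ∧ a = b := by
  have hn : 0 < n := i.pos
  have hn' : (n : ℝ) ≠ 0 := by positivity
  field_simp at h
  have hnat : n ^ 2 * a + (σ i : ℕ) = n ^ 2 * b + (σ j : ℕ) := by
    have : (n : ℝ) ^ 2 * a + ((σ i : ℕ) : ℝ) = (n : ℝ) ^ 2 * b + ((σ j : ℕ) : ℝ) := by linarith
    exact_mod_cast this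
  have hle : n ≤ n ^ 2 := Nat.le_self_pow two_ne_zero n
  have hi : (σ i : ℕ) < n ^ 2 := (σ i).isLt.trans_le hle
  have hj : (σ j : ℕ) < n ^ 2 := (σ j).isLt.trans_le hle
  have hmod := congrArg (· % n ^ 2) hnat
  simp only [Nat.mul_add_mod, Nat.mod_eq_of_lt hi, Nat.mod_eq_of_lt hj] at hmod
  refine ⟨σ.injective (Fin.ext hmod), ?_⟩
  rw [hmod] at hnat
  exact Nat.eq_of_mul_eq_mul_left (by positivity) (Nat.add_right_cancel hnat)

theorem IsMRF.mono {I : Type*} [DecidableEq I] [Fintype I] {f : Finset I → ℕ} (hf : IsMRF f) :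
    Monotone f := by
  refine Finset.monotone_iff_forall_le_insert.2 ?_
  intro S a _
  rcases hf.dichot S a with h | h <;> omega

/-- Faithfulness of the prioritized egalitarian mechanism: if agent `i` replaces her
report by its restriction to the bundle `A i` she receives, then in every non-redundant
σ-Lorenz dominating allocation for the new profile she still receives `A i`. -/
theorem PE_faithful
    {n : ℕ} {I : Type*} [DecidableEq I] [Fintype I]
    (σ : Equiv.Perm (Fin n))
    (f : Fin n → Finset I → ℕ) (hf : ∀ i, IsMRF (f i))
    (A : Fin n → Finset I) (hA : IsAllocation A)
    (hNR : NonRedundant f A) (hLD : SigmaLorenzDom σ f A)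
    (i : Fin n)
    (A' : Fin n → Finset I) (hA' : IsAllocation A')
    (hNR' : NonRedundant (Function.update f i (restrictVal (f i) (A i))) A')
    (hLD' : SigmaLorenzDom σ (Function.update f i (restrictVal (f i) (A i))) A') :
    A' i = A i := by
  have hfA : pUtil σ (Function.update f i (restrictVal (f i) (A i))) A = pUtil σ f A := by
    funext j
    by_cases hj : j = i
    · subst hj; simp [pUtil, restrictVal]
    · simp [pUtil, hj]
  have hfA' : pUtil σ (Function.update f i (restrictVal (f i) (A i))) A'
      = pUtil σ f (Function.update A' i (A' i ∩ A i)) := by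
    funext j
    by_cases hj : j = i
    · subst hj; simp [pUtil, restrictVal]
    · simp [pUtil, hj]
  have hsub : ∀ j, Function.update A' i (A' i ∩ A i) j ⊆ A' j := by
    intro j
    by_cases hj : j = i
    · subst hj; simp
    · simp [hj]
  have hB : IsAllocation (Function.update A' i (A' i ∩ A i)) := fun j k hjk =>
    (hA' j k hjk).mono (hsub j) (hsub k)
  have hmap := LorenzGE.map_eq (hLD _ hB) (by simpa only [hfA, hfA'] using hLD' A hA)
  have hmem : pUtil σ f A i ∈
      Finset.univ.val.map (pUtil σ f (Function.update A' i (A' i ∩ A i))) :=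
    hmap ▸ Multiset.mem_map_of_mem _ (Finset.mem_univ i)
  obtain ⟨j, -, hj⟩ := Multiset.mem_map.1 hmem
  obtain ⟨rfl, hval⟩ := eq_of_perturbed_eq σ hj
  rw [Function.update_self] at hval
  refine Finset.Subset.antisymm (fun a ha => ?_) (fun a ha => ?_)
  · by_contra hna
    have hlt := hNR' j a ha
    simp only [Function.update_self, restrictVal, Finset.erase_inter] at hlt
    rw [Finset.erase_eq_of_notMem (by simp [hna])] at hlt
    exact lt_irrefl _ hlt
  · by_contra hna
    have hle : f j (A' j ∩ A j) ≤ f j ((A j).erase a) := by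
      refine (hf j).mono fun b hb => ?_
      rw [Finset.mem_inter] at hb
      exact Finset.mem_erase.2 ⟨fun h => hna (h ▸ hb.1), hb.2⟩
    exact absurd (hNR j a ha) (by omega)
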